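/- With the notation and hypotheses of the context (including the Grothendieck–Riemann–Roch relation g_{I,λ} = (∏_j J(0,1,D_{i_j}))·h_{I,λ} and the twist relation c_{(η_1,…,η_n)}·exp(D) = c, and the grading assumptions), the degree-0 component of chPar equals c_0 (i.e. ch_0^{Par}(E) = rank(E)·[X]) and the degree-1 component of chPar equals c_1 − Σ_{i=1}^{n} Σ_{λ ∈ Σ'_i} α_i(λ) · r_{i,λ} · D_i (i.e. ch_1^{Par}(E) = ch_1^{Vb}(E) − Σ_i Σ_λ α_i(λ)·rank(Gr^i_λ)·[D_i]). -/

import Mathlib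

open scoped Classical

noncomputable section

variable {A : Type*} [CommRing A] [Algebra ℝ A]

/-- `exp x = Σ_{k ≥ 0} x^k/k!` for a nilpotent element `x`, as a finite sum (the terms with
`k ≥ nilpotencyClass x` vanish). -/
def nexp (x : A) : A :=
  ∑ m ∈ Finset.range (nilpotencyClass x), ((m.factorial : ℝ))⁻¹ • x ^ m

/-- `J(a,b,x) = Σ_{k ≥ 0} (-1)^k ((b^{k+1} - a^{k+1})/(k+1)!) x^k`, the formal value of
`∫_a^b exp (-ρ x) dρ` for a nilpotent element `x` (a finite sum). -/
def Jf (a b : ℝ) (x : A) : A :=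
  ∑ m ∈ Finset.range (nilpotencyClass x),
    ((-1 : ℝ) ^ m * ((b ^ (m + 1) - a ^ (m + 1)) / (m + 1).factorial)) • x ^ m

variable {n : ℕ} {Sig : Fin n → Type*} [∀ i, Fintype (Sig i)] [∀ i, LinearOrder (Sig i)]

/-- `c_σ = c + Σ_{q=1}^n (-1)^q Σ_{I = {i_1<⋯<i_q}} Σ_{λ : σ_{i_j} < λ_{i_j} ∀ j} g_{I,λ}`,
the Chern character of the component sheaf `E_σ` of a locally abelian parabolic bundle,
computed via the Koszul-style resolution.  Here `λ` runs over multi-indices of covers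
(risers) `λ_i` of `Σ_i` for `i ∈ I` with `σ_i ≤ m_-(λ_i)`. -/
def cSigma (c : A) (g : ∀ I : Finset (Fin n), ((i : I) → Sig i.1 × Sig i.1) → A)
    (σ : ∀ i, Sig i) : A :=
  c + ∑ I ∈ Finset.univ.filter (fun I : Finset (Fin n) => I.Nonempty),
        (-1 : A) ^ I.card *
          ∑ lam ∈ Finset.univ.filter
              (fun lam : (i : I) → Sig i.1 × Sig i.1 =>
                ∀ i : I, (lam i).1 ⋖ (lam i).2 ∧ σ i.1 ≤ (lam i).1),
            g I lam

/-- The parabolic Chern character, given by the Iyer–Simpson integral formula evaluated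
formally: `chPar = (∏_i J(0,1,D_i))⁻¹ Σ_{σ} c_σ ∏_i J(α_-(σ_i), α_+(σ_i), D_i)`. -/
def chPar (D : Fin n → A) (αm αp : ∀ i, Sig i → ℝ) (c : A)
    (g : ∀ I : Finset (Fin n), ((i : I) → Sig i.1 × Sig i.1) → A) : A :=
  Ring.inverse (∏ i, Jf 0 1 (D i)) *
    ∑ σ : ∀ i, Sig i, cSigma c g σ * ∏ i, Jf (αm i (σ i)) (αp i (σ i)) (D i)

/-- The multi-index of covers on the singleton `{i}` determined by one cover `p` of `Σ_i`. -/
def lamOfSingle {n : ℕ} {Sig : Fin n → Type*} (i : Fin n) (p : Sig i × Sig i) :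
    (j : ({i} : Finset (Fin n))) → Sig j.1 × Sig j.1 :=
  fun j => (Finset.mem_singleton.mp j.2).symm ▸ p

/-- The multi-index of covers on the pair `{i₁, i₂}` determined by covers `p₁` of `Σ_{i₁}`
and `p₂` of `Σ_{i₂}`. -/
def lamOfPair {n : ℕ} {Sig : Fin n → Type*} (i₁ i₂ : Fin n)
    (p₁ : Sig i₁ × Sig i₁) (p₂ : Sig i₂ × Sig i₂) :
    (j : ({i₁, i₂} : Finset (Fin n))) → Sig j.1 × Sig j.1 :=
  fun j =>
    if h : j.1 = i₁ then h.symm ▸ p₁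
    else
      (by
        have hj := j.2
        simp only [Finset.mem_insert, Finset.mem_singleton] at hj
        exact ((hj.resolve_left h).symm ▸ p₂ : Sig j.1 × Sig j.1))

/-- The multi-index of covers on the triple `{i₁, i₂, i₃}` determined by covers `p₁, p₂, p₃`
of `Σ_{i₁}, Σ_{i₂}, Σ_{i₃}`. -/
def lamOfTriple {n : ℕ} {Sig : Fin n → Type*} (i₁ i₂ i₃ : Fin n)
    (p₁ : Sig i₁ × Sig i₁) (p₂ : Sig i₂ × Sig i₂) (p₃ : Sig i₃ × Sig i₃) :
    (j : ({i₁, i₂, i₃} : Finset (Fin n))) → Sig j.1 × Sig j.1 :=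
  fun j =>
    if h1 : j.1 = i₁ then h1.symm ▸ p₁
    else if h2 : j.1 = i₂ then h2.symm ▸ p₂
    else
      (by
        have hj := j.2
        simp only [Finset.mem_insert, Finset.mem_singleton] at hj
        exact (((hj.resolve_left h1).resolve_left h2).symm ▸ p₃ : Sig j.1 × Sig j.1))

theorem aux_sum_low {B : Type*} [CommRing B] [Algebra ℝ B] (φ : A →ₐ[ℝ] B) (x : A)
    (hx : IsNilpotent x) (h2 : φ x * φ x = 0) (f : ℕ → ℝ) :
    φ (∑ m ∈ Finset.range (nilpotencyClass x), f m • x ^ m) =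
      f 0 • (1 : B) + f 1 • φ x := by
  have hpow : x ^ nilpotencyClass x = 0 := pow_nilpotencyClass hx
  have key : ∑ m ∈ Finset.range (nilpotencyClass x), f m • x ^ m =
      ∑ m ∈ Finset.range (nilpotencyClass x + 2), f m • x ^ m := by
    apply Finset.sum_subset
    · intro m hm
      simp only [Finset.mem_range] at *
      omega
    · intro m _ hm
      simp only [Finset.mem_range, not_lt] at hm
      rw [pow_eq_zero_of_le hm hpow, smul_zero]
  rw [key, map_sum, Finset.sum_range_succ', Finset.sum_range_succ']
  have : ∑ k ∈ Finset.range (nilpotencyClass x), φ (f (k + 1 + 1) • x ^ (k + 1 + 1)) = 0 := by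
    apply Finset.sum_eq_zero
    intro k _
    rw [map_smul, map_pow, pow_succ, pow_succ, mul_assoc, h2, mul_zero, smul_zero]
  rw [this]
  simp [add_comm]

theorem aux_Jf {B : Type*} [CommRing B] [Algebra ℝ B] (φ : A →ₐ[ℝ] B) (x : A)
    (hx : IsNilpotent x) (h2 : φ x * φ x = 0) (a b : ℝ) :
    φ (Jf a b x) = (b • (1 : B) - (b ^ 2 / 2) • φ x) - (a • (1 : B) - (a ^ 2 / 2) • φ x) := by
  unfold Jf
  rw [aux_sum_low φ x hx h2]
  norm_num [Nat.factorial]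
  module

theorem aux_nexp {B : Type*} [CommRing B] [Algebra ℝ B] (φ : A →ₐ[ℝ] B) (x : A)
    (hx : IsNilpotent x) (h2 : φ x * φ x = 0) :
    φ (nexp x) = 1 + φ x := by
  unfold nexp
  rw [aux_sum_low φ x hx h2]
  norm_num [Nat.factorial]

theorem aux_Jf_unit (x : A) (hx : IsNilpotent x) : IsUnit (Jf 0 1 x) := by
  unfold Jf
  rcases h : nilpotencyClass x with _ | k
  · have hpow : x ^ nilpotencyClass x = 0 := pow_nilpotencyClass hx
    rw [h, pow_zero] at hpow
    have := subsingleton_of_zero_eq_one hpow.symm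
    exact isUnit_of_subsingleton _
  · rw [Finset.sum_range_succ']
    norm_num
    apply IsNilpotent.isUnit_add_one
    have : ∀ s : Finset ℕ, ∀ f : ℕ → ℝ, IsNilpotent (∑ m ∈ s, f m • x ^ (m + 1)) := by
      intro s f
      have : ∑ m ∈ s, f m • x ^ (m + 1) = x * ∑ m ∈ s, f m • x ^ m := by
        rw [Finset.mul_sum]
        refine Finset.sum_congr rfl fun m _ => ?_
        rw [mul_smul_comm, pow_succ']
      rw [this]
      exact Commute.isNilpotent_mul_right (Commute.all _ _) hx
    exact this _ _

theorem aux_telescope {S : Type*} [Fintype S] [LinearOrder S] {B : Type*} [AddCommGroup B]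
    (η : S) (hη : ∀ σ, η ≤ σ) (αp αm : S → ℝ)
    (hc : ∀ σ σ', σ ⋖ σ' → αm σ' = αp σ) (G : ℝ → B) (s : S) :
    ∑ t ∈ Finset.univ.filter (fun t : S => t ≤ s), (G (αp t) - G (αm t)) =
      G (αp s) - G (αm η) := by
  induction s using WellFoundedLT.induction with
  | ind s ih =>
    by_cases hs : s = η
    · subst hs
      have : Finset.univ.filter (fun t : S => t ≤ s) = {s} := by
        ext t
        simp only [Finset.mem_filter, Finset.mem_univ, true_and, Finset.mem_singleton]
        exact ⟨fun h => le_antisymm h (hη t), fun h => h.le⟩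
      rw [this, Finset.sum_singleton]
    · have hlt : η < s := lt_of_le_of_ne (hη s) (Ne.symm hs)
      obtain ⟨u, hu⟩ : ∃ u, u ⋖ s := by
        obtain ⟨u, -, hu⟩ := exists_le_covBy_of_lt hlt
        exact ⟨u, hu⟩
      have : Finset.univ.filter (fun t : S => t ≤ s) =
          insert s (Finset.univ.filter (fun t : S => t ≤ u)) := by
        ext t
        simp only [Finset.mem_filter, Finset.mem_univ, true_and, Finset.mem_insert]
        constructor
        · intro h
          rcases h.eq_or_lt with h | h
          · exact Or.inl h
          · exact Or.inr (hu.le_of_lt h)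
        · rintro (h | h)
          · exact h.le
          · exact h.trans hu.le
      rw [this, Finset.sum_insert, ih u hu.lt, hc u s hu]
      · abel
      · simp [hu.lt]

theorem aux_prod_one {B ι : Type*} [CommRing B] [Algebra ℝ B] (e : ι → B)
    (he : ∀ i j, e i * e j = 0) (t : ℝ) (s : Finset ι) :
    ∏ i ∈ s, ((1 : B) + t • e i) = 1 + t • ∑ i ∈ s, e i := by
  induction s using Finset.induction_on with
  | empty => simp
  | insert a s ha ih =>
    rw [Finset.prod_insert ha, Finset.sum_insert ha, ih]
    have : e a * ∑ i ∈ s, e i = 0 := by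
      rw [Finset.mul_sum]
      exact Finset.sum_eq_zero fun j _ => he a j
    simp only [add_mul, mul_add, one_mul, mul_one, smul_mul_smul_comm, this, smul_zero, smul_add]
    abel

theorem aux_mul_prod {B ι : Type*} [CommRing B] [Algebra ℝ B] (e : ι → B)
    (he : ∀ i j, e i * e j = 0) (a b : ι → ℝ) (i : ι) (s : Finset ι) :
    e i * ∏ j ∈ s, (a j • (1 : B) + b j • e j) = (∏ j ∈ s, a j) • e i := by
  induction s using Finset.induction_on with
  | empty => simp
  | insert k s hk ih =>
    rw [Finset.prod_insert hk, Finset.prod_insert hk, ← mul_assoc]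
    have : e i * (a k • (1 : B) + b k • e k) = a k • e i := by
      rw [mul_add, mul_smul_comm, mul_smul_comm, he, mul_one, smul_zero, add_zero]
    rw [this, smul_mul_assoc, ih, smul_smul]

/-- The image of `c_σ` under a homomorphism killing everything of degree at least two. -/
theorem aux_cSigma {B : Type*} [CommRing B] [Algebra ℝ B] (φ : A →ₐ[ℝ] B)
    (D : Fin n → A) (hD : ∀ i, IsNilpotent (D i))
    (he : ∀ i j, φ (D i) * φ (D j) = 0) (c : A)
    (g hh : ∀ I : Finset (Fin n), ((i : I) → Sig i.1 × Sig i.1) → A)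
    (hGRR : ∀ (I : Finset (Fin n)), I.Nonempty →
        ∀ lam : (i : I) → Sig i.1 × Sig i.1, (∀ i : I, (lam i).1 ⋖ (lam i).2) →
          g I lam = (∏ i : I, Jf 0 1 (D i.1)) * hh I lam)
    (hbig : ∀ (I : Finset (Fin n)) (lam : (i : I) → Sig i.1 × Sig i.1),
        (∀ i : I, (lam i).1 ⋖ (lam i).2) → 2 ≤ I.card → φ (hh I lam) = 0)
    (r : ∀ i, Sig i × Sig i → ℝ)
    (hr1 : ∀ i (p : Sig i × Sig i), p.1 ⋖ p.2 →
        φ (hh {i} (lamOfSingle i p)) = r i p • φ (D i))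
    (σ : ∀ i, Sig i) :
    φ (cSigma c g σ) = φ c - ∑ i, ∑ p ∈ Finset.univ.filter (fun p : Sig i × Sig i => p.1 ⋖ p.2),
      if σ i ≤ p.1 then r i p • φ (D i) else 0 := by
  unfold cSigma
  rw [map_add, map_sum, sub_eq_add_neg]
  congr 1
  have hsub : (Finset.univ : Finset (Fin n)).map ⟨fun i => ({i} : Finset (Fin n)),
      Finset.singleton_injective⟩ ⊆
      Finset.univ.filter (fun I : Finset (Fin n) => I.Nonempty) := by
    intro I hI
    simp only [Finset.mem_map, Finset.mem_univ, true_and, Function.Embedding.coeFn_mk] at hI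
    obtain ⟨i, rfl⟩ := hI
    simp
  rw [← Finset.sum_subset hsub, Finset.sum_map, ← Finset.sum_neg_distrib]
  · refine Finset.sum_congr rfl fun i _ => ?_
    simp only [Function.Embedding.coeFn_mk, Finset.card_singleton, pow_one, neg_mul, one_mul,
      map_neg, map_sum]
    congr 1
    rw [← Finset.sum_filter]
    symm
    refine Finset.sum_bij' (fun p _ => lamOfSingle i p)
      (fun lam _ => lam ⟨i, Finset.mem_singleton_self i⟩) ?_ ?_ ?_ ?_ ?_
    · intro p hp
      simp only [Finset.mem_filter, Finset.mem_univ, true_and] at hp ⊢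
      rintro ⟨j, hj⟩
      obtain rfl := Finset.mem_singleton.mp hj
      exact hp
    · intro lam hl
      simp only [Finset.mem_filter, Finset.mem_univ, true_and] at hl ⊢
      exact hl ⟨i, _⟩
    · intro p _
      rfl
    · intro lam _
      funext ⟨j, hj⟩
      obtain rfl := Finset.mem_singleton.mp hj
      rfl
    · intro p hp
      simp only [Finset.mem_filter, Finset.mem_univ, true_and] at hp
      rw [hGRR {i} (Finset.singleton_nonempty i), map_mul, hr1 i p hp.1, map_prod,
        mul_comm, smul_mul_assoc]
      · congr 1
        rw [Finset.univ_eq_attach,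
          Finset.prod_attach ({i} : Finset (Fin n)) (fun j => φ (Jf 0 1 (D j)))]
        rw [Finset.prod_singleton, aux_Jf φ _ (hD i) (he i i)]
        norm_num [mul_sub, he]
      · rintro ⟨j, hj⟩
        obtain rfl := Finset.mem_singleton.mp hj
        exact hp.1
  · intro I hI hI2
    simp only [Finset.mem_filter, Finset.mem_univ, true_and] at hI
    have hcard : 2 ≤ I.card := by
      have h1 : 0 < I.card := hI.card_pos
      by_contra hlt
      have : I.card = 1 := by omega
      obtain ⟨i, rfl⟩ := Finset.card_eq_one.mp this
      exact hI2 (by simp)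
    rw [map_mul, map_sum, Finset.sum_eq_zero, mul_zero]
    intro lam hl
    simp only [Finset.mem_filter, Finset.mem_univ, true_and] at hl
    rw [hGRR I hI lam (fun i => (hl i).1), map_mul, hbig I lam (fun i => (hl i).1) hcard, mul_zero]

/-- The computation of `chPar` modulo degree at least two. -/
theorem aux_main {B : Type*} [CommRing B] [Algebra ℝ B] (φ : A →ₐ[ℝ] B)
    (D : Fin n → A) (hD : ∀ i, IsNilpotent (D i))
    (he : ∀ i j, φ (D i) * φ (D j) = 0)
    (η τ : ∀ i, Sig i) (hη : ∀ i σ, η i ≤ σ) (hτ : ∀ i σ, σ ≤ τ i)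
    (α : ∀ i, Sig i × Sig i → ℝ)
    (αp αm : ∀ i, Sig i → ℝ)
    (hαpτ : ∀ i, αp i (τ i) = 0)
    (hαpc : ∀ i (σ σ' : Sig i), σ ⋖ σ' → αp i σ = α i (σ, σ'))
    (hαmη : ∀ i, αm i (η i) = -1)
    (hαmc : ∀ i (σ σ' : Sig i), σ ⋖ σ' → αm i σ' = α i (σ, σ'))
    (c : A)
    (g hh : ∀ I : Finset (Fin n), ((i : I) → Sig i.1 × Sig i.1) → A)
    (hGRR : ∀ (I : Finset (Fin n)), I.Nonempty →
        ∀ lam : (i : I) → Sig i.1 × Sig i.1, (∀ i : I, (lam i).1 ⋖ (lam i).2) →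
          g I lam = (∏ i : I, Jf 0 1 (D i.1)) * hh I lam)
    (htwist : cSigma c g (fun i => η i) * nexp (∑ i, D i) = c)
    (hbig : ∀ (I : Finset (Fin n)) (lam : (i : I) → Sig i.1 × Sig i.1),
        (∀ i : I, (lam i).1 ⋖ (lam i).2) → 2 ≤ I.card → φ (hh I lam) = 0)
    (r : ∀ i, Sig i × Sig i → ℝ)
    (hr1 : ∀ i (p : Sig i × Sig i), p.1 ⋖ p.2 →
        φ (hh {i} (lamOfSingle i p)) = r i p • φ (D i)) :
    φ (chPar D αm αp c g) = φ c -
      ∑ i, ∑ p ∈ Finset.univ.filter (fun p : Sig i × Sig i => p.1 ⋖ p.2),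
            (α i p * r i p) • φ (D i) := by
  have hcs := aux_cSigma φ D hD he c g hh hGRR hbig r hr1
  set E : B := ∑ i, φ (D i) with hE
  set T : B := ∑ i, ∑ p ∈ Finset.univ.filter (fun p : Sig i × Sig i => p.1 ⋖ p.2),
            (α i p * r i p) • φ (D i) with hT
  set S : B := ∑ i, ∑ p ∈ Finset.univ.filter (fun p : Sig i × Sig i => p.1 ⋖ p.2),
            r i p • φ (D i) with hS
  have heE : ∀ i, φ (D i) * E = 0 := fun i => by
    rw [hE, Finset.mul_sum]; exact Finset.sum_eq_zero fun j _ => he i j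
  have hEE : E * E = 0 := by
    conv_lhs => arg 1; rw [hE]
    rw [Finset.sum_mul]; exact Finset.sum_eq_zero fun j _ => heE j
  have hTE : T * E = 0 := by
    rw [hT, Finset.sum_mul]
    refine Finset.sum_eq_zero fun i _ => ?_
    rw [Finset.sum_mul]
    refine Finset.sum_eq_zero fun p _ => ?_
    rw [smul_mul_assoc, heE, smul_zero]
  have hSE : S * E = 0 := by
    rw [hS, Finset.sum_mul]
    refine Finset.sum_eq_zero fun i _ => ?_
    rw [Finset.sum_mul]
    refine Finset.sum_eq_zero fun p _ => ?_
    rw [smul_mul_assoc, heE, smul_zero]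
  -- the twist relation
  have htw : (φ c - S) * (1 + E) = φ c := by
    have hnil : IsNilpotent (∑ i, D i) := isNilpotent_sum fun i _ => hD i
    have h := congrArg φ htwist
    have hED : φ (∑ i, D i) = E := by rw [map_sum]
    rw [map_mul, hcs, aux_nexp φ _ hnil (by rw [hED, hEE]), hED] at h
    refine Eq.trans ?_ h
    refine congrArg (fun z => (φ c - z) * (1 + E)) ?_
    rw [hS]
    refine Finset.sum_congr rfl fun i _ => Finset.sum_congr rfl fun p _ => ?_
    rw [if_pos (hη i _)]
  have hSc : S = φ c * E := by linear_combination -htw - hSE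
  -- the telescoping sums
  have htel : ∀ i (s : Sig i), ∑ t ∈ Finset.univ.filter (fun t : Sig i => t ≤ s),
      φ (Jf (αm i t) (αp i t) (D i)) =
      (αp i s + 1) • (1 : B) + (1 / 2 - αp i s ^ 2 / 2) • φ (D i) := by
    intro i s
    have h := aux_telescope (η i) (hη i) (αp i) (αm i)
      (fun a b hab => by rw [hαmc i a b hab, hαpc i a b hab])
      (fun a : ℝ => a • (1 : B) - (a ^ 2 / 2) • φ (D i)) s
    simp only [hαmη] at h
    rw [Finset.sum_congr rfl fun t _ => aux_Jf φ (D i) (hD i) (he i i) (αm i t) (αp i t), h]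
    module
  have htelτ : ∀ i, ∑ t : Sig i, φ (Jf (αm i t) (αp i t) (D i)) =
      (1 : B) + (1 / 2 : ℝ) • φ (D i) := by
    intro i
    have h := htel i (τ i)
    rw [Finset.filter_true_of_mem (fun t _ => hτ i t), hαpτ] at h
    rw [h]
    norm_num
  -- the defining relation of chPar
  have hunit : IsUnit (∏ i, Jf 0 1 (D i)) :=
    IsUnit.prod_univ_iff.mpr fun i => aux_Jf_unit _ (hD i)
  have hdef : (∏ i, Jf 0 1 (D i)) * chPar D αm αp c g =
      ∑ σ : ∀ i, Sig i, cSigma c g σ * ∏ i, Jf (αm i (σ i)) (αp i (σ i)) (D i) := by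
    unfold chPar
    rw [← mul_assoc, Ring.mul_inverse_cancel _ hunit, one_mul]
  have hφ := congrArg φ hdef
  have hL : φ (∏ i, Jf 0 1 (D i)) = 1 - (1 / 2 : ℝ) • E := by
    rw [map_prod]
    have := aux_prod_one (fun i => φ (D i)) he (-(1 / 2)) Finset.univ
    rw [neg_smul, ← sub_eq_add_neg] at this
    rw [← this]
    refine Finset.prod_congr rfl fun i _ => ?_
    rw [aux_Jf φ _ (hD i) (he i i)]
    norm_num
    module
  have hP : ∑ σ : ∀ i, Sig i, ∏ i, φ (Jf (αm i (σ i)) (αp i (σ i)) (D i)) =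
      1 + (1 / 2 : ℝ) • E := by
    rw [← Fintype.prod_sum (fun i t => φ (Jf (αm i t) (αp i t) (D i)))]
    rw [Finset.prod_congr rfl fun i _ => htelτ i]
    exact aux_prod_one (fun i => φ (D i)) he (1 / 2) Finset.univ
  have hQ : ∀ i (p : Sig i × Sig i), p.1 ⋖ p.2 →
      ∑ σ : ∀ i, Sig i, (if σ i ≤ p.1 then r i p • φ (D i) else 0) *
        ∏ j, φ (Jf (αm j (σ j)) (αp j (σ j)) (D j)) =
      (α i p * r i p) • φ (D i) + r i p • φ (D i) := by
    intro i p hp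
    have h1 : ∀ σ : ∀ i, Sig i, (if σ i ≤ p.1 then r i p • φ (D i) else 0) *
        ∏ j, φ (Jf (αm j (σ j)) (αp j (σ j)) (D j)) =
        (r i p • φ (D i)) * ∏ j, (if (∀ h : j = i, σ j ≤ h ▸ p.1) then
          φ (Jf (αm j (σ j)) (αp j (σ j)) (D j)) else 0) := by
      intro σ
      by_cases hσ : σ i ≤ p.1
      · rw [if_pos hσ]
        congr 1
        refine Finset.prod_congr rfl fun j _ => ?_
        rw [if_pos]
        rintro rfl
        exact hσ
      · rw [if_neg hσ, zero_mul, Finset.prod_eq_zero (Finset.mem_univ i), mul_zero]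
        rw [if_neg]
        intro h
        exact hσ (h rfl)
    rw [Finset.sum_congr rfl fun σ _ => h1 σ, ← Finset.mul_sum,
      ← Fintype.prod_sum (fun j t => if (∀ h : j = i, t ≤ h ▸ p.1) then
          φ (Jf (αm j t) (αp j t) (D j)) else 0)]
    have h2 : ∀ j, ∑ t : Sig j, (if (∀ h : j = i, t ≤ h ▸ p.1) then
          φ (Jf (αm j t) (αp j t) (D j)) else 0) =
        (if j = i then α i p + 1 else 1) • (1 : B) +
          (if j = i then 1 / 2 - α i p ^ 2 / 2 else (1 / 2 : ℝ)) • φ (D j) := by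
      intro j
      by_cases hj : j = i
      · subst hj
        rw [if_pos rfl, if_pos rfl]
        have := htel j p.1
        rw [hαpc j p.1 p.2 hp] at this
        rw [← Finset.sum_filter]
        simpa using this
      · rw [if_neg hj, if_neg hj]
        simp only [hj, IsEmpty.forall_iff, if_true]
        rw [htelτ, one_smul]
    rw [Finset.prod_congr rfl fun j _ => h2 j, smul_mul_assoc,
      aux_mul_prod (fun j => φ (D j)) he, Finset.prod_ite_eq' Finset.univ i]
    simp only [Finset.mem_univ, if_true]
    module
  have hR : φ (∑ σ : ∀ i, Sig i, cSigma c g σ * ∏ i, Jf (αm i (σ i)) (αp i (σ i)) (D i)) =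
      φ c * (1 + (1 / 2 : ℝ) • E) - (T + S) := by
    rw [map_sum]
    simp only [map_mul, map_prod, hcs, sub_mul]
    rw [Finset.sum_sub_distrib, ← Finset.mul_sum, hP]
    congr 1
    simp only [Finset.sum_mul]
    rw [Finset.sum_comm, hT, hS, ← Finset.sum_add_distrib]
    refine Finset.sum_congr rfl fun i _ => ?_
    rw [Finset.sum_comm, ← Finset.sum_add_distrib]
    refine Finset.sum_congr rfl fun p hp => ?_
    exact hQ i p (Finset.mem_filter.mp hp).2
  rw [hR, map_mul, hL] at hφ
  set F : B := (1 / 2 : ℝ) • E with hF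
  have hFE : E = F + F := by rw [hF]; module
  have hFF : F * F = 0 := by rw [hF, smul_mul_smul_comm, hEE, smul_zero]
  have hTF : T * F = 0 := by rw [hF, mul_smul_comm, hTE, smul_zero]
  have hSF : S * F = 0 := by rw [hF, mul_smul_comm, hSE, smul_zero]
  rw [hFE] at hSc
  linear_combination (1 + F) * hφ + (φ (chPar D αm αp c g) + φ c) * hFF - hTF - hSF - hSc

/-- Truncation of a graded algebra modulo degree at least two, as a map to dual numbers. -/
def aux_trunc (𝒜 : ℕ → Submodule ℝ A) [GradedAlgebra 𝒜] : A →ₐ[ℝ] TrivSqZeroExt A A :=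
  AlgHom.ofLinearMap
    { toFun := fun x => (TrivSqZeroExt.inl (DirectSum.decompose 𝒜 x 0 : A) +
        TrivSqZeroExt.inr (DirectSum.decompose 𝒜 x 1 : A))
      map_add' := by
        intro x y
        ext <;> simp
      map_smul' := by
        intro t x
        have h : ∀ k, (DirectSum.decompose 𝒜 (t • x) k : A) =
            t • (DirectSum.decompose 𝒜 x k : A) :=
          fun k => (GradedAlgebra.proj 𝒜 k).map_smul t x
        rw [h, h]
        ext <;> simp }
    (by
      have h0 := DirectSum.decompose_of_mem_same 𝒜 (SetLike.GradedOne.one_mem (A := 𝒜))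
      have h1 := DirectSum.decompose_of_mem_ne 𝒜 (SetLike.GradedOne.one_mem (A := 𝒜))
        (zero_ne_one)
      ext
      · simp only [LinearMap.coe_mk, AddHom.coe_mk]
        simpa using h0
      · simp only [LinearMap.coe_mk, AddHom.coe_mk]
        simpa using h1)
    (by
      intro x y
      have hm : ∀ k, (DirectSum.decompose 𝒜 (x * y) k : A) =
        ∑ ij ∈ Finset.HasAntidiagonal.antidiagonal k, (DirectSum.decompose 𝒜 x ij.1 : A) *
          (DirectSum.decompose 𝒜 y ij.2 : A) := by
        intro k
        rw [DirectSum.decompose_mul, DirectSum.coe_mul_apply_eq_sum_antidiagonal]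
      ext
      · simp only [LinearMap.coe_mk, AddHom.coe_mk]
        rw [hm]
        simp
      · simp only [LinearMap.coe_mk, AddHom.coe_mk]
        rw [hm, hm]
        simp [Finset.Nat.antidiagonal_succ]
        try ring)

theorem aux_trunc_fst (𝒜 : ℕ → Submodule ℝ A) [GradedAlgebra 𝒜] (x : A) :
    (aux_trunc 𝒜 x).fst = (DirectSum.decompose 𝒜 x 0 : A) := by
  simp [aux_trunc]

theorem aux_trunc_snd (𝒜 : ℕ → Submodule ℝ A) [GradedAlgebra 𝒜] (x : A) :
    (aux_trunc 𝒜 x).snd = (DirectSum.decompose 𝒜 x 1 : A) := by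
  simp [aux_trunc]

theorem aux_trunc_deg1 (𝒜 : ℕ → Submodule ℝ A) [GradedAlgebra 𝒜] (x : A) (hx : x ∈ 𝒜 1) :
    aux_trunc 𝒜 x = TrivSqZeroExt.inr x := by
  ext
  · rw [aux_trunc_fst, DirectSum.decompose_of_mem_ne 𝒜 hx one_ne_zero, TrivSqZeroExt.fst_inr]
  · rw [aux_trunc_snd, DirectSum.decompose_of_mem_same 𝒜 hx, TrivSqZeroExt.snd_inr]

/-- Degree `0` and `1` parts of the parabolic Chern character:
`ch_0^{Par}(E) = rank(E)·[X]` and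
`ch_1^{Par}(E) = ch_1^{Vb}(E) - Σ_i Σ_{λ ∈ Σ'_i} α_i(λ) rank(Gr^i_λ) [D_i]`. -/
theorem chPar_deg0_deg1
    {A : Type*} [CommRing A] [Algebra ℝ A]
    {n : ℕ} (hn : 1 ≤ n)
    {Sig : Fin n → Type*} [∀ i, Fintype (Sig i)] [∀ i, LinearOrder (Sig i)]
    [∀ i, Nontrivial (Sig i)]
    (D : Fin n → A) (hD : ∀ i, IsNilpotent (D i))
    (η τ : ∀ i, Sig i) (hη : ∀ i σ, η i ≤ σ) (hτ : ∀ i σ, σ ≤ τ i)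
    (α : ∀ i, Sig i × Sig i → ℝ)
    (hα : ∀ i p, p.1 ⋖ p.2 → α i p ∈ Set.Ioc (-1 : ℝ) 0)
    (hαmono : ∀ i (p p' : Sig i × Sig i),
        p.1 ⋖ p.2 → p'.1 ⋖ p'.2 → p.1 ≤ p'.1 → α i p ≤ α i p')
    (αp αm : ∀ i, Sig i → ℝ)
    (hαpτ : ∀ i, αp i (τ i) = 0)
    (hαpc : ∀ i (σ σ' : Sig i), σ ⋖ σ' → αp i σ = α i (σ, σ'))
    (hαmη : ∀ i, αm i (η i) = -1)
    (hαmc : ∀ i (σ σ' : Sig i), σ ⋖ σ' → αm i σ' = α i (σ, σ'))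
    (c : A)
    (g hh : ∀ I : Finset (Fin n), ((i : I) → Sig i.1 × Sig i.1) → A)
    (hGRR : ∀ (I : Finset (Fin n)), I.Nonempty →
        ∀ lam : (i : I) → Sig i.1 × Sig i.1, (∀ i : I, (lam i).1 ⋖ (lam i).2) →
          g I lam = (∏ i : I, Jf 0 1 (D i.1)) * hh I lam)
    (htwist : cSigma c g (fun i => η i) * nexp (∑ i, D i) = c)
    (𝒜 : ℕ → Submodule ℝ A) [GradedAlgebra 𝒜]
    (hD1 : ∀ i, D i ∈ 𝒜 1)
    (hhlow : ∀ (I : Finset (Fin n)) (lam : (i : I) → Sig i.1 × Sig i.1),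
        (∀ i : I, (lam i).1 ⋖ (lam i).2) → ∀ m, m < I.card →
          (DirectSum.decompose 𝒜 (hh I lam) m : A) = 0)
    (r : ∀ i, Sig i × Sig i → ℚ)
    (hr0 : ∀ i (p : Sig i × Sig i), p.1 ⋖ p.2 → 0 ≤ r i p)
    (hr1 : ∀ i (p : Sig i × Sig i), p.1 ⋖ p.2 →
        (DirectSum.decompose 𝒜 (hh {i} (lamOfSingle i p)) 1 : A) = (r i p : ℝ) • D i) :
    (DirectSum.decompose 𝒜 (chPar D αm αp c g) 0 : A) =
        (DirectSum.decompose 𝒜 c 0 : A) ∧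
      (DirectSum.decompose 𝒜 (chPar D αm αp c g) 1 : A) =
        (DirectSum.decompose 𝒜 c 1 : A) -
          ∑ i, ∑ p ∈ Finset.univ.filter (fun p : Sig i × Sig i => p.1 ⋖ p.2),
            (α i p * (r i p : ℝ)) • D i := by
  have hφD : ∀ i, aux_trunc 𝒜 (D i) = TrivSqZeroExt.inr (D i) := fun i =>
    aux_trunc_deg1 𝒜 _ (hD1 i)
  have key := aux_main (aux_trunc 𝒜) D hD
    (fun i j => by rw [hφD, hφD, TrivSqZeroExt.inr_mul_inr])
    η τ hη hτ α αp αm hαpτ hαpc hαmη hαmc c g hh hGRR htwist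
    (fun I lam hl hc => by
      ext
      · rw [aux_trunc_fst, hhlow I lam hl 0 (by omega), TrivSqZeroExt.fst_zero]
      · rw [aux_trunc_snd, hhlow I lam hl 1 (by omega), TrivSqZeroExt.snd_zero])
    (fun i p => (r i p : ℝ))
    (fun i p hp => by
      rw [hφD]
      ext
      · rw [aux_trunc_fst, hhlow {i} _ _ 0 (by simp)]
        · simp
        · rintro ⟨j, hj⟩
          obtain rfl := Finset.mem_singleton.mp hj
          exact hp
      · rw [aux_trunc_snd, hr1 i p hp]
        simp)
  simp only [hφD] at key
  constructor
  · have h := congrArg TrivSqZeroExt.fst key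
    rw [aux_trunc_fst, TrivSqZeroExt.fst_sub, aux_trunc_fst] at h
    rw [h]
    simp [TrivSqZeroExt.fst_sum]
  · have h := congrArg TrivSqZeroExt.snd key
    rw [aux_trunc_snd, TrivSqZeroExt.snd_sub, aux_trunc_snd] at h
    rw [h]
    simp [TrivSqZeroExt.snd_sum]
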